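/- Let R be a Noetherian commutative ring, I an ideal, and s ∈ R an element contained in every minimal prime of I except one minimal prime P, with s ∉ P. Then the saturation I : s^∞ is contained in P, and every minimal prime of I : s^∞ equals P; moreover I = (I : s^∞) ∩ ⟨I, s^k⟩ for sufficiently large k. -/

import Mathlib

/-- The saturation `I : s^∞ = ⋃ k, (I : s^k)`. -/
def Ideal.sat {A : Type*} [CommRing A] (I : Ideal A) (s : A) : Ideal A :=
  ⨆ k : ℕ, I.colon (Ideal.span {s ^ k})

/-!
Since `s` is a nonzerodivisor modulo `I : s^∞`, no minimal prime of `I : s^∞` contains `s`, and a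
prime not containing `s` lies over `I : s^∞` as soon as it lies over `I`. Hence the minimal primes
of `I : s^∞` are the minimal primes of `I` that avoid `s`.

The decomposition is the modular law: as `I ≤ I : s^∞`, intersecting `I + (s^k)` with `I : s^∞`
gives `I + ((I : s^∞) ∩ (s^k))`, and an element `r * s^k` of `I : s^∞` has `r ∈ I : s^∞`, so it
lies in `I` once `I : s^∞ = I : s^k`.
-/

section Saturation

variable {A : Type*} [CommRing A] {I P : Ideal A} {s x : A} {k : ℕ}

theorem monotone_colon_span_pow (I : Ideal A) (s : A) :
    Monotone fun k : ℕ ↦ I.colon (Ideal.span {s ^ k} : Ideal A) := fun _ _ hmn ↦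
  Submodule.colon_mono le_rfl (Ideal.span_singleton_le_span_singleton.2 (pow_dvd_pow s hmn))

theorem mem_sat : x ∈ I.sat s ↔ ∃ k : ℕ, x * s ^ k ∈ I := by
  rw [Ideal.sat, Submodule.mem_iSup_of_directed _ (monotone_colon_span_pow I s).directed_le]
  exact exists_congr fun k ↦ Ideal.mem_colon_span_singleton

theorem le_sat (I : Ideal A) (s : A) : I ≤ I.sat s := fun _ hx ↦
  mem_sat.2 ⟨0, I.mul_mem_right _ hx⟩

theorem mul_pow_mem_sat : x * s ^ k ∈ I.sat s ↔ x ∈ I.sat s := by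
  refine ⟨fun h ↦ ?_, (I.sat s).mul_mem_right _⟩
  obtain ⟨m, hm⟩ := mem_sat.1 h
  exact mem_sat.2 ⟨k + m, by rwa [pow_add, ← mul_assoc]⟩

theorem sat_le_iff (hP : P.IsPrime) (hs : s ∉ P) : I.sat s ≤ P ↔ I ≤ P := by
  refine ⟨(le_sat I s).trans, fun hIP x hx ↦ ?_⟩
  obtain ⟨k, hk⟩ := mem_sat.1 hx
  exact (hP.mem_or_mem (hIP hk)).resolve_right fun h ↦ hs (hP.mem_of_pow_mem k h)

theorem notMem_of_mem_minimalPrimes_sat (hP : P ∈ (I.sat s).minimalPrimes) : s ∉ P := by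
  intro hs
  obtain ⟨y, hy, hsy⟩ := Ideal.exists_mul_mem_of_mem_minimalPrimes hP hs
  exact hy (mul_pow_mem_sat (k := 1).1 (by rwa [pow_one, mul_comm]))

theorem mem_minimalPrimes_sat : P ∈ (I.sat s).minimalPrimes ↔ P ∈ I.minimalPrimes ∧ s ∉ P := by
  constructor
  · intro hP
    have hs := notMem_of_mem_minimalPrimes_sat hP
    exact ⟨⟨⟨hP.1.1, (le_sat I s).trans hP.1.2⟩, fun Q hQ hQP ↦
      hP.2 ⟨hQ.1, (sat_le_iff hQ.1 fun h ↦ hs (hQP h)).2 hQ.2⟩ hQP⟩, hs⟩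
  · rintro ⟨hP, hs⟩
    exact ⟨⟨hP.1.1, (sat_le_iff hP.1.1 hs).2 hP.1.2⟩, fun Q hQ ↦
      hP.2 ⟨hQ.1, (le_sat I s).trans hQ.2⟩⟩

theorem exists_forall_ge_sat_eq_colon [IsNoetherianRing A] (I : Ideal A) (s : A) :
    ∃ n : ℕ, ∀ k ≥ n, I.sat s = I.colon (Ideal.span {s ^ k}) := by
  let c : ℕ →o Ideal A := ⟨_, monotone_colon_span_pow I s⟩
  have hlim : I.sat s = c (monotonicSequenceLimitIndex c) :=
    WellFoundedGT.iSup_eq_monotonicSequenceLimit c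
  exact ⟨_, fun k hk ↦ le_antisymm (hlim.trans_le (c.monotone hk)) (le_iSup c k)⟩

theorem sat_inf_sup_span_pow (h : I.sat s = I.colon (Ideal.span {s ^ k})) :
    I.sat s ⊓ (I ⊔ Ideal.span {s ^ k}) = I := by
  have hinf : Ideal.span {s ^ k} ⊓ I.sat s ≤ I := by
    rintro x ⟨hx, hxs⟩
    obtain ⟨r, rfl⟩ := Ideal.mem_span_singleton'.1 hx
    have hr : r ∈ I.sat s := mul_pow_mem_sat.1 hxs
    rw [h] at hr
    exact Ideal.mem_colon_span_singleton.1 hr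
  rw [inf_comm, sup_inf_assoc_of_le _ (le_sat I s), sup_eq_left.2 hinf]

end Saturation

theorem stmt_19 {R : Type*} [CommRing R] [IsNoetherianRing R]
    (I P : Ideal R) (hP : P ∈ I.minimalPrimes)
    (s : R) (hsP : s ∉ P)
    (hsep : ∀ Q ∈ I.minimalPrimes, Q ≠ P → s ∈ Q) :
    I.sat s ≤ P ∧
    (∀ Q ∈ (I.sat s).minimalPrimes, Q = P) ∧
    ∃ k₀ : ℕ, ∀ k ≥ k₀, I = I.sat s ⊓ (I ⊔ Ideal.span {s ^ k}) := by
  refine ⟨(sat_le_iff hP.1.1 hsP).2 hP.1.2, fun Q hQ ↦ ?_, ?_⟩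
  · obtain ⟨hQI, hsQ⟩ := mem_minimalPrimes_sat.1 hQ
    exact not_imp_comm.1 (hsep Q hQI) hsQ
  · obtain ⟨k₀, hk₀⟩ := exists_forall_ge_sat_eq_colon I s
    exact ⟨k₀, fun k hk ↦ (sat_inf_sup_span_pow (hk₀ k hk)).symm⟩
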